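/- arXiv:1910.09529 — 2 statements merged into one kernel-verified Lean document; each statement's English description precedes it below -/
import Mathlib

section
/- Let f : ℝ^d → ℝ be convex and differentiable with ∇f L-Lipschitz on ℝ^d (L > 0), and let x* be a minimizer of f with f* = f(x*). Let x^{k−1}, x^k, x^{k+1} ∈ ℝ^d and λ_{k−1}, λ_k > 0 satisfy x^k = x^{k−1} − λ_{k−1}∇f(x^{k−1}), x^{k+1} = x^k − λ_k∇f(x^k), x^k ≠ x^{k−1}, ∇f(x^k) ≠ ∇f(x^{k−1}), and λ_k ≤ 1/(λ_{k−1}L²) + 1/(2L_k), where L_k = ‖∇f(x^k) − ∇f(x^{k−1})‖/‖x^k − x^{k−1}‖. Set θ_k = λ_k/λ_{k−1}. Then ‖x^{k+1} − x*‖² + (1/2)‖x^{k+1} − x^k‖² + 2λ_k(1+θ_k)(f(x^k) − f*) ≤ ‖x^k − x*‖² + (1/2)‖x^k − x^{k−1}‖² + 2λ_kθ_k(f(x^{k−1}) − f*). -/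
open scoped RealInnerProductSpace

/-!
Write `g = ∇f(xᵏ)`, `Δg = ∇f(xᵏ) - ∇f(xᵏ⁻¹)` and `Δx = xᵏ - xᵏ⁻¹`. A convex function with
`L`-Lipschitz gradient exceeds its tangent plane at `x` by at least `‖∇f(x) - ∇f(y)‖² / (2L)` at
`y`. Using this from `xᵏ` to the minimizer and from `xᵏ` to `xᵏ⁻¹` reduces the energy inequality to
`2λₖ²⟪Δg, g⟫ ≤ ½‖Δx‖² + ½λₖ²‖g‖² + λₖ²‖Δg‖² / (λₖ₋₁L) + λₖ‖g‖² / L`.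
The step-size rule gives `λₖ ≤ c + ‖Δx‖ / (2‖Δg‖)` with `c = min λₖ (1 / (λₖ₋₁L²))`. After
Cauchy–Schwarz the second part of this bound is absorbed by the first two terms on the right, and
the first part by the last two: the minimum `c` is at most the geometric mean `√(λₖ / λₖ₋₁) / L`
that AM-GM requires.
-/

section Scalar

lemma sq_min_le_mul {R : Type*} [Semiring R] [LinearOrder R] [IsOrderedRing R] {a b : R}
    (ha : 0 ≤ a) (hb : 0 ≤ b) : min a b ^ 2 ≤ a * b := by
  rw [sq]
  exact mul_le_mul (min_le_left a b) (min_le_right a b) (le_min ha hb) ha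

lemma two_mul_mul_min_le {l m L a G : ℝ} (hl : 0 ≤ l) (hm : 0 < m) (hL : 0 < L) :
    2 * (l * a * G * min l (1 / (m * L ^ 2))) ≤ l ^ 2 * a ^ 2 / (m * L) + l * G ^ 2 / L := by
  apply two_mul_le_add_of_sq_le_mul (by positivity) (by positivity)
  calc (l * a * G * min l (1 / (m * L ^ 2))) ^ 2
      = (l * a * G) ^ 2 * min l (1 / (m * L ^ 2)) ^ 2 := mul_pow _ _ _
    _ ≤ (l * a * G) ^ 2 * (l * (1 / (m * L ^ 2))) := by
        gcongr
        exact sq_min_le_mul hl (by positivity)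
    _ = l ^ 2 * a ^ 2 / (m * L) * (l * G ^ 2 / L) := by
        field_simp

lemma two_mul_sq_mul_le_of_le_add {l m L a b G : ℝ} (hl : 0 ≤ l) (hm : 0 < m) (hL : 0 < L)
    (ha : 0 < a) (hb : 0 ≤ b) (hG : 0 ≤ G) (h : l ≤ 1 / (m * L ^ 2) + 1 / (2 * (a / b))) :
    2 * l ^ 2 * (a * G) ≤
      1 / 2 * b ^ 2 + 1 / 2 * (l ^ 2 * G ^ 2) + l ^ 2 * a ^ 2 / (m * L) + l * G ^ 2 / L := by
  set c := min l (1 / (m * L ^ 2))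
  have l_le : l ≤ c + b / (2 * a) := by
    rw [min_add, le_min_iff]
    refine ⟨le_add_of_nonneg_right (by positivity), h.trans_eq ?_⟩
    rw [← mul_div_assoc, one_div_div]
  calc 2 * l ^ 2 * (a * G) = 2 * l * a * G * l := by ring
    _ ≤ 2 * l * a * G * (c + b / (2 * a)) := by gcongr
    _ = 2 * (l * a * G * c) + b * (l * G) := by field_simp
    _ ≤ (l ^ 2 * a ^ 2 / (m * L) + l * G ^ 2 / L)
          + (1 / 2 * b ^ 2 + 1 / 2 * (l ^ 2 * G ^ 2)) := by
        gcongr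
        · exact two_mul_mul_min_le hl hm hL
        · linarith [two_mul_le_add_sq b (l * G)]
    _ = _ := by ring

end Scalar

section Gradient

variable {F : Type*} [NormedAddCommGroup F] [InnerProductSpace ℝ F]

lemma norm_sub_smul_sub_sq (x z g : F) (l : ℝ) :
    ‖x - l • g - z‖ ^ 2 = ‖x - z‖ ^ 2 + 2 * l * ⟪g, z - x⟫ + l ^ 2 * ‖g‖ ^ 2 := by
  rw [sub_right_comm, norm_sub_sq_real, inner_smul_right, norm_smul, mul_pow, Real.norm_eq_abs,
    sq_abs, real_inner_comm, ← neg_sub z x, inner_neg_right]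
  ring

variable [CompleteSpace F] {f : F → ℝ} {f' : F → F} {L : ℝ}

lemma eq_zero_of_hasGradientAt_of_isLocalMin {g x : F} (hf : HasGradientAt f g x)
    (hx : IsLocalMin f x) : g = 0 :=
  (map_eq_zero_iff _ (InnerProductSpace.toDual ℝ F).injective).1
    (hx.hasFDerivAt_eq_zero hf.hasFDerivAt)

lemma hasDerivAt_comp_add_smul_of_hasGradientAt {g x v : F} {t : ℝ}
    (hf : HasGradientAt f g (x + t • v)) :
    HasDerivAt (fun s : ℝ ↦ f (x + s • v)) ⟪g, v⟫ t := by
  have hline : HasDerivAt (fun s : ℝ ↦ x + s • v) v t := by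
    simpa only [id, one_smul] using ((hasDerivAt_id t).smul_const v).const_add x
  exact hf.hasFDerivAt.comp_hasDerivAt t hline

lemma image_add_le_of_gradient_lipschitz (hdiff : ∀ y, HasGradientAt f (f' y) y) {x : F}
    (hLip : ∀ y, ‖f' y - f' x‖ ≤ L * ‖y - x‖) (v : F) :
    f (x + v) ≤ f x + ⟪f' x, v⟫ + L / 2 * ‖v‖ ^ 2 := by
  have hcurve (t : ℝ) : HasDerivAt (fun s : ℝ ↦ f (x + s • v)) ⟪f' (x + t • v), v⟫ t :=
    hasDerivAt_comp_add_smul_of_hasGradientAt (hdiff _)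
  have hbound (t : ℝ) : HasDerivAt (fun s : ℝ ↦ f x + s * ⟪f' x, v⟫ + L / 2 * ‖v‖ ^ 2 * s ^ 2)
      (⟪f' x, v⟫ + L * t * ‖v‖ ^ 2) t := by
    refine ((((hasDerivAt_id t).mul_const ⟪f' x, v⟫).const_add (f x)).add
      ((hasDerivAt_pow 2 t).const_mul (L / 2 * ‖v‖ ^ 2))).congr_deriv ?_
    push_cast
    ring
  have hderiv_le (t : ℝ) (ht : 0 ≤ t) :
      ⟪f' (x + t • v), v⟫ ≤ ⟪f' x, v⟫ + L * t * ‖v‖ ^ 2 := by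
    rw [← sub_le_iff_le_add', ← inner_sub_left]
    calc ⟪f' (x + t • v) - f' x, v⟫ ≤ ‖f' (x + t • v) - f' x‖ * ‖v‖ := real_inner_le_norm _ _
      _ ≤ L * ‖x + t • v - x‖ * ‖v‖ := by gcongr; exact hLip _
      _ = L * t * ‖v‖ ^ 2 := by
          rw [add_sub_cancel_left, norm_smul, Real.norm_of_nonneg ht]
          ring
  have hle := image_le_of_deriv_right_le_deriv_boundary
    (fun t _ ↦ (hcurve t).continuousAt.continuousWithinAt)
    (fun t _ ↦ (hcurve t).hasDerivWithinAt) (by simp)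
    (fun t _ ↦ (hbound t).continuousAt.continuousWithinAt)
    (fun t _ ↦ (hbound t).hasDerivWithinAt)
    (fun t ht ↦ hderiv_le t ht.1) (Set.right_mem_Icc.2 zero_le_one)
  simpa using hle

-- The gap is read off at `y + L⁻¹ • (f' x - f' y)`, the minimizer of the quadratic upper model
-- of `f` at `y` minus the tangent plane at `x`.
lemma tangent_add_sq_norm_gradient_sub_le (hdiff : ∀ z, HasGradientAt f (f' z) z) (hL : 0 < L)
    {x y : F} (hconv : ∀ z, f x + ⟪f' x, z - x⟫ ≤ f z)
    (hLip : ∀ z, ‖f' z - f' y‖ ≤ L * ‖z - y‖) :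
    f x + ⟪f' x, y - x⟫ + ‖f' x - f' y‖ ^ 2 / (2 * L) ≤ f y := by
  set w := f' x - f' y with hw
  have lower : f x + ⟪f' x, y - x⟫ + L⁻¹ * ⟪f' x, w⟫ ≤ f (y + L⁻¹ • w) := by
    simpa only [add_sub_right_comm, inner_add_right, inner_smul_right, add_assoc]
      using hconv (y + L⁻¹ • w)
  have upper : f (y + L⁻¹ • w) ≤ f y + L⁻¹ * ⟪f' y, w⟫ + ‖w‖ ^ 2 / (2 * L) := by
    refine (image_add_le_of_gradient_lipschitz hdiff hLip _).trans_eq ?_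
    rw [inner_smul_right, norm_smul, Real.norm_of_nonneg (inv_nonneg.2 hL.le)]
    field_simp
  have inner_gap : L⁻¹ * ⟪f' x, w⟫ - L⁻¹ * ⟪f' y, w⟫ = 2 * (‖w‖ ^ 2 / (2 * L)) := by
    rw [← mul_sub, ← inner_sub_left, ← hw, real_inner_self_eq_norm_sq]
    field_simp
  linarith

lemma sq_norm_gradient_step_sub_critical_le (hdiff : ∀ z, HasGradientAt f (f' z) z)
    (hconv : ∀ y z, f y + ⟪f' y, z - y⟫ ≤ f z) (hL : 0 < L)
    (hLip : ∀ y z, ‖f' y - f' z‖ ≤ L * ‖y - z‖) {x z : F} (hz : f' z = 0) {l : ℝ} (hl : 0 ≤ l) :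
    ‖x - l • f' x - z‖ ^ 2 + 2 * l * (f x - f z) + l * ‖f' x‖ ^ 2 / L
      ≤ ‖x - z‖ ^ 2 + l ^ 2 * ‖f' x‖ ^ 2 := by
  have gap := tangent_add_sq_norm_gradient_sub_le hdiff hL (hconv x) (hLip · z)
  rw [hz, sub_zero] at gap
  calc ‖x - l • f' x - z‖ ^ 2 + 2 * l * (f x - f z) + l * ‖f' x‖ ^ 2 / L
      = ‖x - z‖ ^ 2 + l ^ 2 * ‖f' x‖ ^ 2
          + 2 * l * (f x + ⟪f' x, z - x⟫ + ‖f' x‖ ^ 2 / (2 * L) - f z) := by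
        rw [norm_sub_smul_sub_sq]
        field_simp
        ring
    _ ≤ ‖x - z‖ ^ 2 + l ^ 2 * ‖f' x‖ ^ 2 :=
        add_le_of_nonpos_right
          (mul_nonpos_of_nonneg_of_nonpos (by positivity) (sub_nonpos.2 gap))

lemma sq_norm_gradient_add_le_of_gradient_step (hdiff : ∀ z, HasGradientAt f (f' z) z)
    (hconv : ∀ y z, f y + ⟪f' y, z - y⟫ ≤ f z) (hL : 0 < L)
    (hLip : ∀ y z, ‖f' y - f' z‖ ≤ L * ‖y - z‖) {x y : F} {m : ℝ} (hm : 0 < m)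
    (hx : x = y - m • f' y) :
    ‖f' x‖ ^ 2 + (f x - f y) / m + ‖f' x - f' y‖ ^ 2 / (2 * m * L) ≤ ⟪f' x - f' y, f' x⟫ := by
  have gap := tangent_add_sq_norm_gradient_sub_le hdiff hL (hconv x) (hLip · y)
  have hyx : y - x = m • f' y := by rw [hx, sub_sub_cancel]
  rw [hyx, inner_smul_right] at gap
  calc ‖f' x‖ ^ 2 + (f x - f y) / m + ‖f' x - f' y‖ ^ 2 / (2 * m * L)
      = ⟪f' x - f' y, f' x⟫
          + (f x + m * ⟪f' x, f' y⟫ + ‖f' x - f' y‖ ^ 2 / (2 * L) - f y) / m := by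
        rw [inner_sub_left, real_inner_self_eq_norm_sq, real_inner_comm]
        field_simp
        ring
    _ ≤ ⟪f' x - f' y, f' x⟫ :=
        add_le_of_nonpos_right (div_nonpos_of_nonpos_of_nonneg (sub_nonpos.2 gap) hm.le)

theorem adgd_known_L_energy_step_general
    (hdiff : ∀ x, HasGradientAt f (f' x) x)
    (hconv : ∀ x y, f x + ⟪f' x, y - x⟫ ≤ f y)
    (hL : 0 < L)
    (hLip : ∀ x y, ‖f' x - f' y‖ ≤ L * ‖x - y‖)
    {xstar : F} (hmin : ∀ y, f xstar ≤ f y)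
    {xkm1 xk xk1 : F} {lkm1 lk : ℝ} (hlkm1 : 0 < lkm1) (hlk : 0 < lk)
    (hxk : xk = xkm1 - lkm1 • f' xkm1)
    (hxk1 : xk1 = xk - lk • f' xk)
    (hgne : f' xk ≠ f' xkm1)
    (hstep : lk ≤ 1 / (lkm1 * L ^ 2)
      + 1 / (2 * (‖f' xk - f' xkm1‖ / ‖xk - xkm1‖))) :
    ‖xk1 - xstar‖ ^ 2 + (1 / 2) * ‖xk1 - xk‖ ^ 2
        + 2 * lk * (1 + lk / lkm1) * (f xk - f xstar)
    ≤ ‖xk - xstar‖ ^ 2 + (1 / 2) * ‖xk - xkm1‖ ^ 2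
        + 2 * lk * (lk / lkm1) * (f xkm1 - f xstar) := by
  have hgrad : f' xstar = 0 :=
    eq_zero_of_hasGradientAt_of_isLocalMin (hdiff xstar) (.of_forall hmin)
  have to_min := sq_norm_gradient_step_sub_critical_le hdiff hconv hL hLip (x := xk) hgrad hlk.le
  have to_prev := mul_le_mul_of_nonneg_left
    (sq_norm_gradient_add_le_of_gradient_step hdiff hconv hL hLip hlkm1 hxk)
    (show 0 ≤ 2 * lk ^ 2 by positivity)
  have inner_le := mul_le_mul_of_nonneg_left
    (real_inner_le_norm (f' xk - f' xkm1) (f' xk)) (show 0 ≤ 2 * lk ^ 2 by positivity)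
  have step_bound := two_mul_sq_mul_le_of_le_add hlk.le hlkm1 hL
    (norm_sub_pos_iff.2 hgne) (norm_nonneg _) (norm_nonneg (f' xk)) hstep
  have step_sq : ‖xk1 - xk‖ ^ 2 = lk ^ 2 * ‖f' xk‖ ^ 2 := by
    rw [hxk1, norm_sub_smul_sub_sq]
    simp
  rw [← hxk1] at to_min
  rw [step_sq]
  have expand : 2 * lk ^ 2 * (‖f' xk‖ ^ 2 + (f xk - f xkm1) / lkm1
        + ‖f' xk - f' xkm1‖ ^ 2 / (2 * lkm1 * L))
      = 2 * (lk ^ 2 * ‖f' xk‖ ^ 2) + 2 * lk * (lk / lkm1) * (f xk - f xkm1)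
        + lk ^ 2 * ‖f' xk - f' xkm1‖ ^ 2 / (lkm1 * L) := by
    field_simp
  linarith

end Gradient

/-- Theorem 5 (one-step energy inequality for Algorithm 5, where the global smoothness
constant `L` is known). -/
theorem adgd_known_L_energy_step {d : ℕ}
    (f : EuclideanSpace ℝ (Fin d) → ℝ)
    (f' : EuclideanSpace ℝ (Fin d) → EuclideanSpace ℝ (Fin d))
    (hdiff : ∀ x, HasGradientAt f (f' x) x)
    (hconv : ∀ x y, f x + ⟪f' x, y - x⟫ ≤ f y)
    (L : ℝ) (hL : 0 < L)
    (hLip : ∀ x y, ‖f' x - f' y‖ ≤ L * ‖x - y‖)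
    (xstar : EuclideanSpace ℝ (Fin d)) (hmin : ∀ y, f xstar ≤ f y)
    (xkm1 xk xk1 : EuclideanSpace ℝ (Fin d))
    (lkm1 lk : ℝ) (hlkm1 : 0 < lkm1) (hlk : 0 < lk)
    (hxk : xk = xkm1 - lkm1 • f' xkm1)
    (hxk1 : xk1 = xk - lk • f' xk)
    (hxne : xk ≠ xkm1) (hgne : f' xk ≠ f' xkm1)
    (hstep : lk ≤ 1 / (lkm1 * L ^ 2)
      + 1 / (2 * (‖f' xk - f' xkm1‖ / ‖xk - xkm1‖))) :
    ‖xk1 - xstar‖ ^ 2 + (1 / 2) * ‖xk1 - xk‖ ^ 2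
        + 2 * lk * (1 + lk / lkm1) * (f xk - f xstar)
    ≤ ‖xk - xstar‖ ^ 2 + (1 / 2) * ‖xk - xkm1‖ ^ 2
        + 2 * lk * (lk / lkm1) * (f xkm1 - f xstar) :=
  adgd_known_L_energy_step_general hdiff hconv hL hLip hmin hlkm1 hlk hxk hxk1 hgne hstep
end

section
/- Let 0 < μ ≤ L, let 0 < α ≤ μ/L, and let x* ∈ ℝ^d. Let (g_k)_{k≥0} be a sequence of differentiable functions g_k : ℝ^d → ℝ, each μ-strongly convex with L-Lipschitz gradient and satisfying ∇g_k(x*) = 0. Let x⁰ ∈ ℝ^d with x⁰ ≠ x*, let λ₀ > 0, set x¹ = x⁰ − λ₀∇g₀(x⁰), λ₁ = α‖x¹ − x⁰‖/‖∇g₁(x¹) − ∇g₁(x⁰)‖, and for k ≥ 1 define x^{k+1} = x^k − λ_k∇g_k(x^k) and, for k ≥ 2, λ_k = min{√(1 + θ_{k−1})·λ_{k−1}, α‖x^k − x^{k−1}‖/‖∇g_k(x^k) − ∇g_k(x^{k−1})‖} when ∇g_k(x^k) ≠ ∇g_k(x^{k−1}) and λ_k = √(1 + θ_{k−1})·λ_{k−1}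 otherwise, where θ_k = λ_k/λ_{k−1}. Then for every k ≥ 1, ‖x^{k+1} − x*‖² ≤ exp(−kαμ/L) · 2(1 + λ₀²L²)‖x⁰ − x*‖². -/
open scoped RealInnerProductSpace

/-!
Strong convexity and smoothness squeeze every secant step `α ‖y - z‖ / ‖∇g y - ∇g z‖` into
`[α / L, α / μ]`. The growth cap `√(1 + θ) λ` never shrinks a step, so all steps from `λ₁` on stay
in that interval for as long as the iterates differ from `x*`; once an iterate hits `x*` it stays
there. As `α / μ ≤ 1 / L`, each such step is a gradient step that contracts `‖x - x*‖²` by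
`1 - λ μ ≤ exp (-α μ / L)`. The initial step `λ₀` is arbitrary, which costs the factor
`2 (1 + λ₀² L²)`.
-/

section GradientStep

variable {E : Type*} [NormedAddCommGroup E] [InnerProductSpace ℝ E]
  {f : E → ℝ} {f' : E → E} {x z : E} {μ L s : ℝ}

theorem le_of_strongConvex_of_gradient_eq_zero (hμ : 0 ≤ μ)
    (hconv : ∀ y, f z + ⟪f' z, y - z⟫ + μ / 2 * ‖y - z‖ ^ 2 ≤ f y) (hz : f' z = 0) (y : E) :
    f z ≤ f y := by
  have hquad : 0 ≤ μ / 2 * ‖y - z‖ ^ 2 := by positivity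
  have hy := hconv y
  rw [hz, inner_zero_left] at hy
  linarith

theorem mul_norm_sub_le_norm_gradient_sub
    (hconv : ∀ x y, f x + ⟪f' x, y - x⟫ + μ / 2 * ‖y - x‖ ^ 2 ≤ f y) (x y : E) :
    μ * ‖x - y‖ ≤ ‖f' x - f' y‖ := by
  rcases eq_or_ne x y with rfl | hxy
  · simp
  have hmono : μ * ‖x - y‖ ^ 2 ≤ ⟪f' x - f' y, x - y⟫ := by
    have hx := hconv x y
    have hy := hconv y x
    rw [← neg_sub x y, inner_neg_right, norm_neg] at hx
    rw [inner_sub_left]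
    linarith
  refine le_of_mul_le_mul_right ?_ (norm_sub_pos_iff.2 hxy)
  calc μ * ‖x - y‖ * ‖x - y‖ = μ * ‖x - y‖ ^ 2 := by ring
    _ ≤ ⟪f' x - f' y, x - y⟫ := hmono
    _ ≤ ‖f' x - f' y‖ * ‖x - y‖ := real_inner_le_norm _ _

theorem norm_gradient_step_sub_sq_le_two_mul (hz : f' z = 0)
    (hLip : ‖f' x - f' z‖ ≤ L * ‖x - z‖) :
    ‖x - s • f' x - z‖ ^ 2 ≤ 2 * (1 + s ^ 2 * L ^ 2) * ‖x - z‖ ^ 2 := by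
  have hgrad : ‖f' x‖ ^ 2 ≤ (L * ‖x - z‖) ^ 2 := by
    rw [hz, sub_zero] at hLip
    gcongr
  have hparallelogram := parallelogram_law_with_norm ℝ (x - z) (s • f' x)
  calc ‖x - s • f' x - z‖ ^ 2 = ‖x - z - s • f' x‖ ^ 2 := by rw [sub_right_comm]
    _ ≤ 2 * (‖x - z‖ ^ 2 + ‖s • f' x‖ ^ 2) := by
      linarith [mul_self_nonneg ‖x - z + s • f' x‖]
    _ = 2 * (‖x - z‖ ^ 2 + s ^ 2 * ‖f' x‖ ^ 2) := by
      rw [norm_smul, mul_pow, Real.norm_eq_abs, sq_abs]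
    _ ≤ 2 * (‖x - z‖ ^ 2 + s ^ 2 * (L * ‖x - z‖) ^ 2) := by gcongr
    _ = 2 * (1 + s ^ 2 * L ^ 2) * ‖x - z‖ ^ 2 := by ring

variable [CompleteSpace E]

theorem le_add_inner_add_sq_of_lipschitz_gradient (hgrad : ∀ y, HasGradientAt f (f' y) y)
    (hLip : ∀ y, ‖f' y - f' x‖ ≤ L * ‖y - x‖) (v : E) :
    f (x + v) ≤ f x + ⟪f' x, v⟫ + L / 2 * ‖v‖ ^ 2 := by
  have hline (t : ℝ) : HasDerivAt (fun t : ℝ ↦ f (x + t • v)) ⟪f' (x + t • v), v⟫ t := by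
    have hpath : HasDerivAt (fun t : ℝ ↦ x + t • v) v t := by
      simpa using ((hasDerivAt_id t).smul_const v).const_add x
    exact (hgrad (x + t • v)).hasFDerivAt.comp_hasDerivAt t hpath
  have hquad (t : ℝ) : HasDerivAt (fun t : ℝ ↦ f x + t * ⟪f' x, v⟫ + t ^ 2 * (L / 2 * ‖v‖ ^ 2))
      (⟪f' x, v⟫ + 2 * t * (L / 2 * ‖v‖ ^ 2)) t := by
    simpa using! (((hasDerivAt_id t).mul_const ⟪f' x, v⟫).const_add (f x)).fun_add
      ((hasDerivAt_pow 2 t).mul_const (L / 2 * ‖v‖ ^ 2))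
  have hslope (t : ℝ) (ht : 0 ≤ t) :
      ⟪f' (x + t • v), v⟫ ≤ ⟪f' x, v⟫ + 2 * t * (L / 2 * ‖v‖ ^ 2) := by
    have hvar : ‖f' (x + t • v) - f' x‖ ≤ L * (t * ‖v‖) := by
      simpa [norm_smul, abs_of_nonneg ht] using hLip (x + t • v)
    calc ⟪f' (x + t • v), v⟫ = ⟪f' x, v⟫ + ⟪f' (x + t • v) - f' x, v⟫ := by
          rw [inner_sub_left]; ring
      _ ≤ ⟪f' x, v⟫ + ‖f' (x + t • v) - f' x‖ * ‖v‖ := by gcongr; exact real_inner_le_norm _ _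
      _ ≤ ⟪f' x, v⟫ + L * (t * ‖v‖) * ‖v‖ := by gcongr
      _ = ⟪f' x, v⟫ + 2 * t * (L / 2 * ‖v‖ ^ 2) := by ring
  simpa using image_le_of_deriv_right_le_deriv_boundary (a := 0) (b := 1)
    (fun t _ ↦ (hline t).continuousAt.continuousWithinAt)
    (fun t _ ↦ (hline t).hasDerivWithinAt) (by simp)
    (fun t _ ↦ (hquad t).continuousAt.continuousWithinAt)
    (fun t _ ↦ (hquad t).hasDerivWithinAt) (fun t ht ↦ hslope t ht.1)
    (Set.right_mem_Icc.2 zero_le_one)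

theorem inv_mul_norm_gradient_sq_le {m : ℝ} (hL : 0 < L) (hgrad : ∀ y, HasGradientAt f (f' y) y)
    (hLip : ∀ y, ‖f' y - f' x‖ ≤ L * ‖y - x‖) (hmin : ∀ y, m ≤ f y) :
    L⁻¹ * ‖f' x‖ ^ 2 ≤ 2 * (f x - m) := by
  -- The step `-L⁻¹ ∇f(x)` minimizes the quadratic upper bound on `f`.
  have hdescent := le_add_inner_add_sq_of_lipschitz_gradient hgrad hLip (-(L⁻¹ • f' x))
  have hbound : L / 2 * ‖-(L⁻¹ • f' x)‖ ^ 2 = L⁻¹ * ‖f' x‖ ^ 2 / 2 := by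
    rw [norm_neg, norm_smul, Real.norm_of_nonneg (by positivity)]
    field_simp
  rw [hbound, inner_neg_right, inner_smul_right, real_inner_self_eq_norm_sq] at hdescent
  linarith [hmin (x + -(L⁻¹ • f' x))]

theorem norm_gradient_step_sub_sq_le (hL : 0 < L) (hgrad : ∀ y, HasGradientAt f (f' y) y)
    (hLip : ∀ y, ‖f' y - f' x‖ ≤ L * ‖y - x‖) (hmin : ∀ y, f z ≤ f y)
    (hconv : f x + ⟪f' x, z - x⟫ + μ / 2 * ‖z - x‖ ^ 2 ≤ f z) (hs : 0 ≤ s) (hsL : s ≤ L⁻¹) :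
    ‖x - s • f' x - z‖ ^ 2 ≤ (1 - s * μ) * ‖x - z‖ ^ 2 := by
  have hinner : L⁻¹ * ‖f' x‖ ^ 2 + μ * ‖x - z‖ ^ 2 ≤ 2 * ⟪x - z, f' x⟫ := by
    have hgap := inv_mul_norm_gradient_sq_le hL hgrad hLip hmin
    rw [← neg_sub x z, inner_neg_right, norm_neg, real_inner_comm] at hconv
    linarith
  calc ‖x - s • f' x - z‖ ^ 2 = ‖x - z - s • f' x‖ ^ 2 := by rw [sub_right_comm]
    _ = ‖x - z‖ ^ 2 - s * (2 * ⟪x - z, f' x⟫) + s * (s * ‖f' x‖ ^ 2) := by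
      rw [norm_sub_sq_real, inner_smul_right, norm_smul, mul_pow, Real.norm_eq_abs, sq_abs]
      ring
    _ ≤ ‖x - z‖ ^ 2 - s * (L⁻¹ * ‖f' x‖ ^ 2 + μ * ‖x - z‖ ^ 2) + s * (L⁻¹ * ‖f' x‖ ^ 2) := by
      gcongr
    _ = (1 - s * μ) * ‖x - z‖ ^ 2 := by ring

end GradientStep

section AdaptiveStep

variable {E : Type*} [NormedAddCommGroup E]

/-- `α` times the inverse of the Lipschitz constant of `f'` observed on the pair `y, z`; it is `0`
when `f' y = f' z`. -/
noncomputable def secantStep (α : ℝ) (f' : E → E) (y z : E) : ℝ :=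
  α * ‖y - z‖ / ‖f' y - f' z‖

theorem secantStep_mem_Icc {f' : E → E} {y z : E} {α μ L : ℝ} (hα : 0 ≤ α) (hμ : 0 < μ)
    (hlower : μ * ‖y - z‖ ≤ ‖f' y - f' z‖) (hupper : ‖f' y - f' z‖ ≤ L * ‖y - z‖)
    (hyz : y ≠ z) : secantStep α f' y z ∈ Set.Icc (α / L) (α / μ) := by
  have hdist : 0 < ‖y - z‖ := norm_sub_pos_iff.2 hyz
  have hgrad : 0 < ‖f' y - f' z‖ := (mul_pos hμ hdist).trans_le hlower
  constructor
  · calc α / L = α * ‖y - z‖ / (L * ‖y - z‖) := (mul_div_mul_right _ _ hdist.ne').symm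
      _ ≤ secantStep α f' y z := by unfold secantStep; gcongr
  · calc secantStep α f' y z ≤ α * ‖y - z‖ / (μ * ‖y - z‖) := by unfold secantStep; gcongr
      _ = α / μ := mul_div_mul_right _ _ hdist.ne'

theorem le_sqrt_one_add_div_mul {a b : ℝ} (ha : 0 ≤ a) (hb : 0 ≤ b) : b ≤ √(1 + b / a) * b :=
  le_mul_of_one_le_left hb <| Real.one_le_sqrt.2 <| le_add_of_nonneg_right <| div_nonneg hb ha

variable [NormedSpace ℝ E]

open Classical in
/-- The iterates `x` and step sizes `lam` of adaptive gradient descent that uses the gradient field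
`g' k` at step `k`, both to move and to estimate the local Lipschitz constant. -/
structure IsAdaptiveSGD (α : ℝ) (g' : ℕ → E → E) (x : ℕ → E) (lam : ℕ → ℝ) : Prop where
  update : ∀ k, x (k + 1) = x k - lam k • g' k (x k)
  lam_zero_pos : 0 < lam 0
  lam_one : lam 1 = secantStep α (g' 1) (x 1) (x 0)
  lam_add_two : ∀ k, lam (k + 2) =
    if g' (k + 2) (x (k + 2)) = g' (k + 2) (x (k + 1)) then
      √(1 + lam (k + 1) / lam k) * lam (k + 1)
    else
      min (√(1 + lam (k + 1) / lam k) * lam (k + 1))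
        (secantStep α (g' (k + 2)) (x (k + 2)) (x (k + 1)))

namespace IsAdaptiveSGD

variable {α μ L : ℝ} {g' : ℕ → E → E} {x : ℕ → E} {lam : ℕ → ℝ} {z : E}

theorem succ_eq_of_eq (run : IsAdaptiveSGD α g' x lam) (hz : ∀ k, g' k z = 0) {k : ℕ}
    (hk : x k = z) : x (k + 1) = z := by
  rw [run.update, hk, hz, smul_zero, sub_zero]

theorem succ_ne_self (run : IsAdaptiveSGD α g' x lam) (hinj : ∀ k, Function.Injective (g' k))
    (hz : ∀ k, g' k z = 0) {k : ℕ} (hlam : 0 < lam k) (hk : x k ≠ z) : x (k + 1) ≠ x k := by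
  have hgrad : g' k (x k) ≠ 0 := hz k ▸ (hinj k).ne hk
  simpa [run.update] using And.intro hlam.ne' hgrad

theorem lam_mem_Icc (run : IsAdaptiveSGD α g' x lam) (hα : 0 < α) (hμ : 0 < μ) (hL : 0 < L)
    (hanti : ∀ k y z, μ * ‖y - z‖ ≤ ‖g' k y - g' k z‖)
    (hLip : ∀ k y z, ‖g' k y - g' k z‖ ≤ L * ‖y - z‖) (hz : ∀ k, g' k z = 0) {k : ℕ}
    (hk : x k ≠ z) : 0 < lam k ∧ lam (k + 1) ∈ Set.Icc (α / L) (α / μ) := by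
  have hinj (k) : Function.Injective (g' k) := fun y w hyw ↦ by
    have hdist : μ * ‖y - w‖ ≤ 0 := by simpa [hyw] using hanti k y w
    exact norm_sub_eq_zero_iff.1
      (le_antisymm (nonpos_of_mul_nonpos_right hdist hμ) (norm_nonneg _))
  have hsecant (k) (hne : x (k + 1) ≠ x k) :
      secantStep α (g' (k + 1)) (x (k + 1)) (x k) ∈ Set.Icc (α / L) (α / μ) :=
    secantStep_mem_Icc hα.le hμ (hanti _ _ _) (hLip _ _ _) hne
  induction k with
  | zero =>
    exact ⟨run.lam_zero_pos,
      run.lam_one ▸ hsecant 0 (run.succ_ne_self hinj hz run.lam_zero_pos hk)⟩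
  | succ k ih =>
    obtain ⟨hpos, hlower, -⟩ := ih (mt (run.succ_eq_of_eq hz) hk)
    have hpos' : 0 < lam (k + 1) := (div_pos hα hL).trans_le hlower
    have hne : x (k + 2) ≠ x (k + 1) := run.succ_ne_self hinj hz hpos' hk
    obtain ⟨hsecant_lower, hsecant_upper⟩ := hsecant (k + 1) hne
    rw [run.lam_add_two, if_neg ((hinj _).ne hne)]
    exact ⟨hpos', le_min (hlower.trans (le_sqrt_one_add_div_mul hpos.le hpos'.le)) hsecant_lower,
      min_le_of_right_le hsecant_upper⟩

end IsAdaptiveSGD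

end AdaptiveStep

section Convergence

variable {E : Type*} [NormedAddCommGroup E] [InnerProductSpace ℝ E] [CompleteSpace E]
  {μ L α : ℝ} {z : E} {g : ℕ → E → ℝ} {g' : ℕ → E → E} {x : ℕ → E} {lam : ℕ → ℝ}

theorem IsAdaptiveSGD.norm_sub_sq_le_exp_mul (run : IsAdaptiveSGD α g' x lam) (hμ : 0 < μ)
    (hα : 0 < α) (hαμL : α ≤ μ / L) (hgrad : ∀ k x, HasGradientAt (g k) (g' k x) x)
    (hconv : ∀ k x y, g k x + ⟪g' k x, y - x⟫ + μ / 2 * ‖y - x‖ ^ 2 ≤ g k y)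
    (hLip : ∀ k x y, ‖g' k x - g' k y‖ ≤ L * ‖x - y‖) (hz : ∀ k, g' k z = 0) (k : ℕ) :
    ‖x (k + 2) - z‖ ^ 2 ≤ Real.exp (-(α * μ / L)) * ‖x (k + 1) - z‖ ^ 2 := by
  have hL : 0 < L := (div_pos_iff_of_pos_left hμ).1 (hα.trans_le hαμL)
  by_cases hk : x (k + 1) = z
  · simp [run.succ_eq_of_eq hz hk, hk]
  obtain ⟨-, hlower, hupper⟩ := run.lam_mem_Icc hα hμ hL
    (fun k ↦ mul_norm_sub_le_norm_gradient_sub (hconv k)) hLip hz (mt (run.succ_eq_of_eq hz) hk)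
  have hlamL : lam (k + 1) ≤ L⁻¹ :=
    calc lam (k + 1) ≤ α / μ := hupper
      _ ≤ μ / L / μ := by gcongr
      _ = L⁻¹ := by field_simp
  have hrate : 1 - lam (k + 1) * μ ≤ Real.exp (-(α * μ / L)) :=
    calc 1 - lam (k + 1) * μ ≤ 1 - α / L * μ := by gcongr
      _ = -(α * μ / L) + 1 := by ring
      _ ≤ Real.exp (-(α * μ / L)) := Real.add_one_le_exp _
  calc ‖x (k + 2) - z‖ ^ 2 = ‖x (k + 1) - lam (k + 1) • g' (k + 1) (x (k + 1)) - z‖ ^ 2 := by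
        rw [run.update (k + 1)]
    _ ≤ (1 - lam (k + 1) * μ) * ‖x (k + 1) - z‖ ^ 2 :=
      norm_gradient_step_sub_sq_le hL (hgrad _) (hLip _ · _)
        (le_of_strongConvex_of_gradient_eq_zero hμ.le (hconv _ z) (hz _)) (hconv _ _ _)
        ((div_pos hα hL).le.trans hlower) hlamL
    _ ≤ Real.exp (-(α * μ / L)) * ‖x (k + 1) - z‖ ^ 2 := by gcongr

theorem adaptive_sgd_overparameterized_general (hμ : 0 < μ) (hα : 0 < α)
    (hαμL : α ≤ μ / L) (hgrad : ∀ k x, HasGradientAt (g k) (g' k x) x)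
    (hconv : ∀ k x y, g k x + ⟪g' k x, y - x⟫ + μ / 2 * ‖y - x‖ ^ 2 ≤ g k y)
    (hLip : ∀ k x y, ‖g' k x - g' k y‖ ≤ L * ‖x - y‖) (hz : ∀ k, g' k z = 0)
    (run : IsAdaptiveSGD α g' x lam) (k : ℕ) :
    ‖x (k + 1) - z‖ ^ 2 ≤
      Real.exp (-(k : ℝ) * α * μ / L) * (2 * (1 + lam 0 ^ 2 * L ^ 2) * ‖x 0 - z‖ ^ 2) := by
  have hinit : ‖x 1 - z‖ ^ 2 ≤ 2 * (1 + lam 0 ^ 2 * L ^ 2) * ‖x 0 - z‖ ^ 2 :=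
    run.update 0 ▸ norm_gradient_step_sub_sq_le_two_mul (hz 0) (hLip 0 _ _)
  calc ‖x (k + 1) - z‖ ^ 2 ≤ Real.exp (-(α * μ / L)) ^ k * ‖x 1 - z‖ ^ 2 :=
      le_geom (u := fun k ↦ ‖x (k + 1) - z‖ ^ 2) (Real.exp_nonneg _) k fun j _ ↦
        run.norm_sub_sq_le_exp_mul hμ hα hαμL hgrad hconv hLip hz j
    _ = Real.exp (-(k : ℝ) * α * μ / L) * ‖x 1 - z‖ ^ 2 := by
      rw [← Real.exp_nat_mul]
      ring_nf
    _ ≤ _ := by gcongr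

end Convergence

/-- Linear convergence of adaptive SGD in the overparameterized regime (same-sample
estimates), stated pathwise for a sequence of sampled functions `g_k` each of which is
`μ`-strongly convex, has `L`-Lipschitz gradient, and satisfies `∇g_k(x*) = 0`. -/
theorem adaptive_sgd_overparameterized {d : ℕ}
    (mu L alpha : ℝ) (hmu : 0 < mu) (hmuL : mu ≤ L)
    (halpha0 : 0 < alpha) (halpha1 : alpha ≤ mu / L)
    (xstar : EuclideanSpace ℝ (Fin d))
    (g : ℕ → EuclideanSpace ℝ (Fin d) → ℝ)
    (g' : ℕ → EuclideanSpace ℝ (Fin d) → EuclideanSpace ℝ (Fin d))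
    (hdiff : ∀ k x, HasGradientAt (g k) (g' k x) x)
    (hsc : ∀ k x y, g k x + ⟪g' k x, y - x⟫ + mu / 2 * ‖y - x‖ ^ 2 ≤ g k y)
    (hLip : ∀ k x y, ‖g' k x - g' k y‖ ≤ L * ‖x - y‖)
    (hstar : ∀ k, g' k xstar = 0)
    (x : ℕ → EuclideanSpace ℝ (Fin d)) (lam : ℕ → ℝ)
    (hx0 : x 0 ≠ xstar) (hl0 : 0 < lam 0)
    (hx1 : x 1 = x 0 - lam 0 • g' 0 (x 0))
    (hl1 : lam 1 = alpha * ‖x 1 - x 0‖ / ‖g' 1 (x 1) - g' 1 (x 0)‖)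
    (hupd : ∀ k, 1 ≤ k → x (k + 1) = x k - lam k • g' k (x k))
    (hrec : ∀ k, 2 ≤ k →
      (g' k (x k) ≠ g' k (x (k - 1)) →
        lam k = min (Real.sqrt (1 + lam (k - 1) / lam (k - 2)) * lam (k - 1))
          (alpha * ‖x k - x (k - 1)‖ / ‖g' k (x k) - g' k (x (k - 1))‖)) ∧
      (g' k (x k) = g' k (x (k - 1)) →
        lam k = Real.sqrt (1 + lam (k - 1) / lam (k - 2)) * lam (k - 1))) :
    ∀ k, 1 ≤ k →
      ‖x (k + 1) - xstar‖ ^ 2 ≤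
        Real.exp (-(k : ℝ) * alpha * mu / L) * (2 * (1 + lam 0 ^ 2 * L ^ 2) * ‖x 0 - xstar‖ ^ 2) := by
  have run : IsAdaptiveSGD alpha g' x lam :=
    ⟨Nat.rec hx1 fun k _ ↦ hupd (k + 1) k.succ_pos, hl0, hl1, fun k ↦ by
      split_ifs with heq
      exacts [(hrec (k + 2) (by lia)).2 heq, (hrec (k + 2) (by lia)).1 heq]⟩
  exact fun k _ ↦ adaptive_sgd_overparameterized_general hmu halpha0 halpha1 hdiff hsc hLip
    hstar run k
end
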